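/- arXiv:1404.0455 — 3 statements merged into one kernel-verified Lean document; each statement's English description precedes it below -/
import Mathlib

section
/- Let ξ be irrational, and let S = {(t,y) ∈ ℝ² : a ≤ ξt − y ≤ b} be a strip with irrational slope ξ, with a < b < a + 1. The cut-and-project set Z = {t ∈ ℤ : ∃ y ∈ ℤ, a ≤ ξt − y ≤ b} is BD-equivalent to a lattice in ℝ if and only if b − a ≡ kξ mod ℤ for some integer k. -/
/-- Two subsets of ℝ are bounded-displacement (BD) equivalent if there is a
bijection between them moving every point a uniformly bounded distance. -/
def BDEquiv (Y₁ Y₂ : Set ℝ) : Prop :=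
  ∃ φ : Y₁ ≃ Y₂, ∃ M : ℝ, ∀ y : Y₁, |(y : ℝ) - (φ y : ℝ)| ≤ M

open Filter Topology

noncomputable section

/-- The 1-periodic function `⌊y-a⌋ - ⌊y-b⌋`. -/
def kF (a b y : ℝ) : ℝ := (⌊y - a⌋ : ℝ) - (⌊y - b⌋ : ℝ)

/-- Birkhoff sums of `kF`. -/
def kS (ξ a b : ℝ) (n : ℕ) (y : ℝ) : ℝ := ∑ i ∈ Finset.range n, kF a b (y + i * ξ)

lemma kF_add_int (a b y : ℝ) (m : ℤ) : kF a b (y + m) = kF a b y := by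
  unfold kF
  have h1 : y + m - a = (y - a) + m := by ring
  have h2 : y + m - b = (y - b) + m := by ring
  rw [h1, h2, Int.floor_add_intCast, Int.floor_add_intCast]
  push_cast; ring

lemma kS_add_int (ξ a b y : ℝ) (n : ℕ) (m : ℤ) : kS ξ a b n (y + m) = kS ξ a b n y := by
  unfold kS
  refine Finset.sum_congr rfl fun i _ => ?_
  rw [← kF_add_int a b (y + i * ξ) m]; congr 1; ring

lemma floor_right (x : ℝ) : ∀ᶠ η in 𝓝[≥] (0:ℝ), ⌊x + η⌋ = ⌊x⌋ := by
  have h : Set.Ico (0:ℝ) (⌊x⌋ + 1 - x) ∈ 𝓝[≥] (0:ℝ) :=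
    Ico_mem_nhdsGE (by linarith [Int.lt_floor_add_one x])
  filter_upwards [h] with η hη
  rw [Int.floor_eq_iff]
  exact ⟨by linarith [Int.floor_le x, hη.1], by linarith [hη.2]⟩

lemma floor_left (x : ℝ) : ∀ᶠ η in 𝓝[<] (0:ℝ), ⌊x + η⌋ = ⌈x⌉ - 1 := by
  have h : Set.Ioo (⌈x⌉ - 1 - x) (0:ℝ) ∈ 𝓝[<] (0:ℝ) :=
    Ioo_mem_nhdsLT (by linarith [Int.ceil_lt_add_one x])
  filter_upwards [h] with η hη
  rw [Int.floor_eq_iff]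
  push_cast
  exact ⟨by linarith [hη.1], by linarith [hη.2, Int.le_ceil x]⟩

lemma kS_right (ξ a b : ℝ) (n : ℕ) (y : ℝ) :
    ∀ᶠ η in 𝓝[≥] (0:ℝ), kS ξ a b n (y + η) = kS ξ a b n y := by
  have h : ∀ᶠ η in 𝓝[≥] (0:ℝ), ∀ i ∈ Finset.range n,
      kF a b (y + η + i * ξ) = kF a b (y + i * ξ) := by
    rw [Finset.eventually_all]
    intro i _
    filter_upwards [floor_right (y + i * ξ - a), floor_right (y + i * ξ - b)] with η h1 h2
    unfold kF
    rw [← h1, ← h2]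
    congr 3 <;> ring
  filter_upwards [h] with η hη
  exact Finset.sum_congr rfl hη

lemma irr_int {ξ : ℝ} (hξ : Irrational ξ) {k m : ℤ} (h : (k:ℝ) * ξ = m) : k = 0 := by
  by_contra hk
  exact (hξ.intCast_mul hk).ne_int m h

lemma kS_left {ξ a b : ℝ} (hξ : Irrational ξ) (hno : ¬ ∃ k m : ℤ, b - a = k * ξ + m)
    (n : ℕ) (u v : ℤ) (hu : u ≤ 0) (hu' : 0 < u + n) :
    ∀ᶠ η in 𝓝[<] (0:ℝ), kS ξ a b n (ξ * u + v + a + η) = kS ξ a b n (ξ * u + v + a) - 1 := by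
  have h : ∀ᶠ η in 𝓝[<] (0:ℝ), ∀ i ∈ Finset.range n,
      kF a b (ξ * u + v + a + η + i * ξ) =
        kF a b (ξ * u + v + a + i * ξ) - (if i = (-u).toNat then 1 else 0) := by
    rw [Finset.eventually_all]
    intro i _
    filter_upwards [floor_left (ξ * u + v + a + i * ξ - a),
      floor_left (ξ * u + v + a + i * ξ - b)] with η h1 h2
    unfold kF
    have e1 : ξ * u + v + a + η + i * ξ - a = ξ * u + v + a + i * ξ - a + η := by ring
    have e2 : ξ * u + v + a + η + i * ξ - b = ξ * u + v + a + i * ξ - b + η := by ring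
    rw [e1, e2, h1, h2]
    have h3 : ⌈ξ * u + v + a + i * ξ - b⌉ = ⌊ξ * u + v + a + i * ξ - b⌋ + 1 := by
      rw [Int.ceil_eq_iff]
      push_cast
      refine ⟨?_, (Int.lt_floor_add_one _).le⟩
      rcases (Int.floor_le (ξ * u + v + a + i * ξ - b)).lt_or_eq with h | h
      · linarith
      · exfalso
        apply hno
        refine ⟨u + i, v - ⌊ξ * u + v + a + i * ξ - b⌋, ?_⟩
        push_cast
        linarith
    rw [h3]
    by_cases hi : i = (-u).toNat
    · have hi' : (i:ℤ) = -u := by omega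
      have hi'' : (i:ℝ) = -u := by exact_mod_cast hi'
      have e3 : ξ * u + v + a + i * ξ - a = (v:ℤ) := by rw [hi'']; ring
      rw [e3, if_pos hi, Int.ceil_intCast, Int.floor_intCast]
      push_cast; ring
    · have h4 : ⌈ξ * u + v + a + i * ξ - a⌉ = ⌊ξ * u + v + a + i * ξ - a⌋ + 1 := by
        rw [Int.ceil_eq_iff]
        push_cast
        refine ⟨?_, (Int.lt_floor_add_one _).le⟩
        rcases (Int.floor_le (ξ * u + v + a + i * ξ - a)).lt_or_eq with h | h
        · linarith
        · exfalso
          have : u + i = 0 := by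
            apply irr_int hξ (m := ⌊ξ * u + v + a + i * ξ - a⌋ - v)
            push_cast
            linarith
          omega
      rw [h4, if_neg hi]
      push_cast; ring
  filter_upwards [h] with η hη
  unfold kS
  rw [Finset.sum_congr rfl hη, Finset.sum_sub_distrib, Finset.sum_ite_eq', if_pos]
  rw [Finset.mem_range]; omega

lemma dens {ξ : ℝ} (hξ : Irrational ξ) {x y : ℝ} (hxy : x < y) :
    ∃ t m : ℤ, x < ξ * t + m ∧ ξ * t + m < y := by
  have hd : Dense (AddSubgroup.closure {ξ, 1} : Set ℝ) := by
    rw [dense_addSubgroupClosure_pair_iff]; simpa using hξ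
  obtain ⟨z, hz, h1⟩ := hd.exists_between hxy
  rw [SetLike.mem_coe, AddSubgroup.mem_closure_pair] at hz
  obtain ⟨t, m, rfl⟩ := hz
  refine ⟨t, m, ?_, ?_⟩ <;> simp at h1 <;> linarith [h1.1, h1.2]

/-- two visits on opposite sides of zero -/
lemma opp {ξ : ℝ} (hξ : Irrational ξ) {x y : ℝ} (hxy : x < y) :
    ∃ u v u' v' : ℤ, u ≤ 0 ∧ 0 < u' ∧ (x < ξ * u + v ∧ ξ * u + v < y) ∧
      (x < ξ * u' + v' ∧ ξ * u' + v' < y) := by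
  obtain ⟨u, v, h1, h2⟩ := dens hξ hxy
  set K : ℤ := |u| + 1 with hK
  have hKpos : (0:ℝ) < K := by
    have : 0 < K := by positivity
    exact_mod_cast this
  set ρ := min 1 (min (ξ * u + v - x) (y - (ξ * u + v))) / K with hρ
  have hm : 0 < min 1 (min (ξ * u + v - x) (y - (ξ * u + v))) :=
    lt_min one_pos (lt_min (by linarith) (by linarith))
  have hρ0 : 0 < ρ := div_pos hm hKpos
  obtain ⟨k, l, h3, h4⟩ := dens hξ hρ0
  have h5 : (ξ * k + l) * K < min 1 (min (ξ * u + v - x) (y - (ξ * u + v))) := by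
    rwa [hρ, lt_div_iff₀ hKpos] at h4
  have h6 : 0 < (ξ * k + l) * K := by positivity
  rw [lt_min_iff, lt_min_iff] at h5
  obtain ⟨h7, h8, h9⟩ := h5
  have hk : k ≠ 0 := by
    rintro rfl
    have h10 : (0:ℝ) < ((l * K : ℤ) : ℝ) := by push_cast; simpa using h6
    have h11 : ((l * K : ℤ) : ℝ) < 1 := by push_cast; simpa using h7
    have h12 : 0 < l * K := by exact_mod_cast h10
    have h13 : l * K < 1 := by exact_mod_cast h11
    omega
  have habs := abs_le.1 (le_refl |u|)
  rcases lt_or_gt_of_ne hk with hk | hk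
  · have : k * K ≤ -K := by nlinarith [abs_nonneg u]
    refine ⟨u + k * K, v + l * K, u - k * K, v - l * K, by omega, by omega, ?_, ?_⟩ <;>
      push_cast <;> constructor <;> nlinarith
  · have : K ≤ k * K := by nlinarith [abs_nonneg u]
    refine ⟨u - k * K, v - l * K, u + k * K, v + l * K, by omega, by omega, ?_, ?_⟩ <;>
      push_cast <;> constructor <;> nlinarith

lemma dens_right {ξ : ℝ} (hξ : Irrational ξ) (p : ℝ) {P : ℝ → Prop}
    (h : ∀ᶠ η in 𝓝[>] (0:ℝ), P η) : ∃ t m : ℤ, P (ξ * t + m - p) := by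
  obtain ⟨w, hw, hs⟩ := mem_nhdsGT_iff_exists_Ioo_subset.1 h
  obtain ⟨t, m, h1, h2⟩ := dens hξ (show p < p + w by linarith [Set.mem_Ioi.1 hw])
  exact ⟨t, m, hs ⟨by linarith, by linarith⟩⟩

lemma dens_left {ξ : ℝ} (hξ : Irrational ξ) (p : ℝ) {P : ℝ → Prop}
    (h : ∀ᶠ η in 𝓝[<] (0:ℝ), P η) : ∃ t m : ℤ, P (ξ * t + m - p) := by
  obtain ⟨w, hw, hs⟩ := mem_nhdsLT_iff_exists_Ioo_subset.1 h
  obtain ⟨t, m, h1, h2⟩ := dens hξ (show p + w < p by linarith [Set.mem_Iio.1 hw])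
  exact ⟨t, m, hs ⟨by linarith, by linarith⟩⟩

lemma h_sum {ξ a b c : ℝ} {h : ℤ → ℝ} (hh : ∀ t, h (t + 1) - h t = kF a b (ξ * t) - c)
    (t : ℤ) (n : ℕ) : h (t + n) - h t = kS ξ a b n (ξ * t) - n * c := by
  induction n with
  | zero => simp [kS]
  | succ n ih =>
    have h1 := hh (t + n)
    unfold kS at *
    rw [Finset.sum_range_succ]
    push_cast at *
    rw [← add_assoc]
    have e : ξ * (t + n) = ξ * t + n * ξ := by ring
    rw [e] at h1
    linarith

/-- shift of an increment to nearby points -/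
lemma h_near {ξ a b c : ℝ} {h : ℤ → ℝ} (hh : ∀ t, h (t + 1) - h t = kF a b (ξ * t) - c)
    (s0 t0 : ℤ) : ∃ δ > 0, ∀ t m : ℤ, 0 ≤ ξ * t + m - ξ * t0 → ξ * t + m - ξ * t0 < δ →
      h (t + (s0 - t0)) - h t = h s0 - h t0 := by
  have aux : ∀ (q : ℤ) (n : ℕ), ∃ δ > 0, ∀ t m : ℤ, 0 ≤ ξ * t + m - ξ * q →
      ξ * t + m - ξ * q < δ → h (t + n) - h t = h (q + n) - h q := by
    intro q n
    obtain ⟨w, hw, hs⟩ := mem_nhdsGE_iff_exists_Ico_subset.1 (kS_right ξ a b n (ξ * q))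
    refine ⟨w, hw, fun t m h1 h2 => ?_⟩
    have h3 : kS ξ a b n (ξ * q + (ξ * t + m - ξ * q)) = kS ξ a b n (ξ * q) := hs ⟨h1, h2⟩
    have e : ξ * q + (ξ * t + m - ξ * q) = ξ * t + m := by ring
    rw [e, kS_add_int] at h3
    rw [h_sum hh, h_sum hh, h3]
  rcases le_total t0 s0 with hle | hle
  · obtain ⟨δ, hδ, H⟩ := aux t0 (s0 - t0).toNat
    refine ⟨δ, hδ, fun t m h1 h2 => ?_⟩
    have := H t m h1 h2
    rw [Int.toNat_of_nonneg (by omega)] at this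
    rw [this]; congr 2; omega
  · obtain ⟨δ, hδ, H⟩ := aux s0 (t0 - s0).toNat
    refine ⟨δ, hδ, fun t m h1 h2 => ?_⟩
    have e : ξ * ((t + (s0 - t0) : ℤ) : ℝ) + m - ξ * s0 = ξ * t + m - ξ * t0 := by
      push_cast; ring
    have := H (t + (s0 - t0)) m (by rw [e]; exact h1) (by rw [e]; exact h2)
    rw [Int.toNat_of_nonneg (by omega)] at this
    have e2 : t + (s0 - t0) + (t0 - s0) = t := by ring
    have e3 : s0 + (t0 - s0) = t0 := by ring
    rw [e2, e3] at this
    linarith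

/-- Kesten: bounded discrepancy forces the length to lie in `ℤ + ℤξ`. -/
lemma kesten {ξ a b c : ℝ} (hξ : Irrational ξ) {h : ℤ → ℝ}
    (hh : ∀ t, h (t + 1) - h t = kF a b (ξ * t) - c) {B : ℝ} (hB : ∀ t, |h t| ≤ B) :
    ∃ k m : ℤ, b - a = k * ξ + m := by
  by_contra hno
  have hbdd : BddAbove (Set.range fun q : ℤ × ℤ => h q.1 - h q.2) := by
    refine ⟨2 * B, ?_⟩
    rintro _ ⟨q, rfl⟩
    have := abs_le.1 (hB q.1)
    have := abs_le.1 (hB q.2)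
    simp only; linarith
  set C := ⨆ q : ℤ × ℤ, (h q.1 - h q.2) with hC
  have hCle : ∀ s t, h s - h t ≤ C := fun s t => le_ciSup hbdd (s, t)
  obtain ⟨⟨s0, t0⟩, hst⟩ := exists_lt_of_lt_ciSup (show C - 1/4 < C by linarith)
  simp only at hst
  obtain ⟨δ, hδ, H⟩ := h_near hh s0 t0
  have key : ∀ t m t' m' : ℤ, 0 ≤ ξ * t + m - ξ * t0 → ξ * t + m - ξ * t0 < δ →
      0 ≤ ξ * t' + m' - ξ * t0 → ξ * t' + m' - ξ * t0 < δ → h t' - h t < 1/4 := by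
    intro t m t' m' h1 h2 h3 h4
    have := H t' m' h3 h4
    have := hCle (t' + (s0 - t0)) t
    linarith
  obtain ⟨u, v, u', v', hu, hu', ⟨h1, h2⟩, h3, h4⟩ :=
    opp hξ (show ξ * t0 - a < ξ * t0 + δ - a by linarith)
  set n : ℕ := (u' - u).toNat with hn
  have hnz : (n : ℤ) = u' - u := by omega
  have hnr : (n : ℝ) = u' - u := by exact_mod_cast hnz
  set p := ξ * u + v + a with hp
  have hnear : ∀ᶠ η in 𝓝 (0:ℝ), (ξ * t0 < p + η ∧ p + η < ξ * t0 + δ) ∧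
      (ξ * t0 < ξ * u' + v' + a + η ∧ ξ * u' + v' + a + η < ξ * t0 + δ) := by
    have hc : ∀ z : ℝ, Tendsto (fun η : ℝ => z + η) (𝓝 0) (𝓝 z) := fun z => by
      have : Continuous fun η : ℝ => z + η := by fun_prop
      simpa using this.tendsto 0
    refine ((hc p).eventually (Ioo_mem_nhds ?_ ?_)).and
      ((hc (ξ * u' + v' + a)).eventually (Ioo_mem_nhds ?_ ?_)) <;> linarith
  obtain ⟨t, m, ⟨⟨a1, a2⟩, a3, a4⟩, a5⟩ := dens_right hξ p
    ((hnear.filter_mono nhdsWithin_le_nhds).and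
      ((kS_right ξ a b n p).filter_mono (nhdsWithin_mono _ Set.Ioi_subset_Ici_self)))
  obtain ⟨t', m', ⟨⟨b1, b2⟩, b3, b4⟩, b5⟩ := dens_left hξ p
    ((hnear.filter_mono nhdsWithin_le_nhds).and
      (kS_left hξ hno n u v hu (by omega)))
  rw [← hp] at b5
  have e1 : p + (ξ * t + m - p) = ξ * t + m := by ring
  have e2 : p + (ξ * t' + m' - p) = ξ * t' + m' := by ring
  rw [e1, kS_add_int] at a5
  rw [e2, kS_add_int] at b5
  have c1 := h_sum hh t n
  have c2 := h_sum hh t' n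
  have d1 := key t m (t + n) (m + v' - v) (by linarith) (by linarith)
    (by push_cast; rw [hnr]; linarith) (by push_cast; rw [hnr]; linarith)
  have d2 := key (t' + n) (m' + v' - v) t' m'
    (by push_cast; rw [hnr]; linarith) (by push_cast; rw [hnr]; linarith)
    (by linarith) (by linarith)
  linarith

open Classical in
/-- indicator of the cut-and-project set -/
def kI (ξ a b : ℝ) (t : ℤ) : ℝ :=
  if ∃ y : ℤ, a ≤ ξ * t - y ∧ ξ * t - y ≤ b then 1 else 0

/-- The closed and half-open indicators differ by a bounded coboundary. -/
lemma kI_kF {ξ a b : ℝ} (hξ : Irrational ξ) (hab : a < b) (hb : b < a + 1) :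
    ∃ k : ℤ → ℝ, (∀ t, |k t| ≤ 1) ∧
      ∀ t, k (t + 1) - k t = kI ξ a b t - kF a b (ξ * t) := by
  classical
  refine ⟨fun t => if ∃ s < t, ∃ y : ℤ, ξ * s - b = y then 1 else 0, ?_, ?_⟩
  · intro t; dsimp only; split_ifs <;> simp
  · intro t
    dsimp only
    have uniq : ∀ s s' : ℤ, (∃ y : ℤ, ξ * s - b = y) → (∃ y : ℤ, ξ * s' - b = y) → s = s' := by
      rintro s s' ⟨y, hy⟩ ⟨y', hy'⟩
      have : s - s' = 0 := by
        apply irr_int hξ (m := y - y')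
        push_cast; linarith
      omega
    have f1 := Int.floor_le (ξ * t - a)
    have f2 := Int.lt_floor_add_one (ξ * t - a)
    have g1 := Int.floor_le (ξ * t - b)
    have g2 := Int.lt_floor_add_one (ξ * t - b)
    by_cases ht : ∃ y : ℤ, ξ * t - b = y
    · have n1 : ¬ ∃ s < t, ∃ y : ℤ, ξ * s - b = y := by
        rintro ⟨s, hs, h⟩
        have := uniq s t h ht; omega
      have n2 : ∃ s < t + 1, ∃ y : ℤ, ξ * s - b = y := ⟨t, by omega, ht⟩
      rw [if_pos n2, if_neg n1]
      obtain ⟨y, hy⟩ := ht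
      have n3 : ∃ y : ℤ, a ≤ ξ * t - y ∧ ξ * t - y ≤ b := ⟨y, by linarith, by linarith⟩
      unfold kI kF
      have n4 : ⌊ξ * t - a⌋ = y := by
        rw [Int.floor_eq_iff]; constructor <;> linarith
      rw [if_pos n3, n4, hy, Int.floor_intCast]; ring
    · have n1 : (∃ s < t + 1, ∃ y : ℤ, ξ * s - b = y) ↔ ∃ s < t, ∃ y : ℤ, ξ * s - b = y := by
        constructor
        · rintro ⟨s, hs, h⟩
          refine ⟨s, ?_, h⟩
          rcases (by omega : s < t ∨ s = t) with h' | rfl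
          · exact h'
          · exact absurd h ht
        · rintro ⟨s, hs, h⟩
          exact ⟨s, by omega, h⟩
      simp only [n1, sub_self]
      unfold kI kF
      have l1 : ⌊ξ * t - b⌋ ≤ ⌊ξ * t - a⌋ := Int.floor_le_floor (by linarith)
      have l2 : ⌊ξ * t - a⌋ ≤ ⌊ξ * t - b⌋ + 1 := by
        have : (⌊ξ * t - a⌋:ℝ) < ⌊ξ * t - b⌋ + 2 := by linarith
        have : ⌊ξ * t - a⌋ < ⌊ξ * t - b⌋ + 2 := by exact_mod_cast this
        omega
      split_ifs with hy
      · obtain ⟨y, y1, y2⟩ := hy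
        have q1 : y ≤ ⌊ξ * t - a⌋ := by rw [Int.le_floor]; linarith
        have q2 : ⌊ξ * t - b⌋ < y := by
          rw [Int.floor_lt]
          refine lt_of_le_of_ne (by linarith) fun h => ht ⟨y, h⟩
        have : ⌊ξ * t - a⌋ = ⌊ξ * t - b⌋ + 1 := by omega
        rw [this]; push_cast; ring
      · have : ⌊ξ * t - a⌋ = ⌊ξ * t - b⌋ := by
          by_contra hne
          apply hy
          have e : ⌊ξ * t - a⌋ = ⌊ξ * t - b⌋ + 1 := by omega
          have e' : (⌊ξ * t - a⌋:ℝ) = ⌊ξ * t - b⌋ + 1 := by exact_mod_cast e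
          exact ⟨⌊ξ * t - a⌋, by linarith, by linarith⟩
        rw [this]; ring

lemma cobdd (g : ℤ → ℝ) (hg : ∀ t, |g t| ≤ 1) (k : ℤ) :
    ∃ h : ℤ → ℝ, (∃ B, ∀ t, |h t| ≤ B) ∧ ∀ t, h (t + 1) - h t = g (t - k) - g t := by
  induction k using Int.induction_on with
  | zero => exact ⟨fun _ => 0, ⟨0, by simp⟩, by simp⟩
  | succ k ih =>
    obtain ⟨h, ⟨B, hB⟩, hh⟩ := ih
    refine ⟨fun t => h t - g (t - k - 1), ⟨B + 1, fun t => ?_⟩, fun t => ?_⟩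
    · exact (abs_sub _ _).trans (add_le_add (hB t) (hg _))
    · have e1 : t + 1 - (k:ℤ) - 1 = t - k := by ring
      have e2 : t - ((k:ℤ) + 1) = t - k - 1 := by ring
      dsimp only
      rw [e1, e2]; linarith [hh t]
  | pred k ih =>
    obtain ⟨h, ⟨B, hB⟩, hh⟩ := ih
    refine ⟨fun t => h t + g (t + k), ⟨B + 1, fun t => ?_⟩, fun t => ?_⟩
    · exact (abs_add_le _ _).trans (add_le_add (hB t) (hg _))
    · have e1 : t - (-(k:ℤ) - 1) = t + 1 + k := by ring
      have e2 : t - (-(k:ℤ)) = t + k := by ring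
      have := hh t
      rw [e2] at this
      dsimp only
      rw [e1]; linarith

/-- partial sums over ℤ -/
lemma psum (f : ℤ → ℝ) : ∃ P : ℤ → ℝ, (∀ t, P (t + 1) - P t = f t) ∧
    (∀ t, 0 ≤ t → P t = ∑ i ∈ Finset.Ico 0 t, f i) ∧
    (∀ t, t ≤ 0 → P t = - ∑ i ∈ Finset.Ico t 0, f i) := by
  refine ⟨fun t => ∑ i ∈ Finset.Ico 0 t, f i - ∑ i ∈ Finset.Ico t 0, f i, ?_, ?_, ?_⟩
  · intro t
    dsimp only
    rcases le_or_gt 0 t with ht | ht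
    · have e : Finset.Ico 0 (t + 1) = insert t (Finset.Ico 0 t) := by
        ext x; simp only [Finset.mem_Ico, Finset.mem_insert]; omega
      rw [e, Finset.sum_insert (by simp), Finset.Ico_eq_empty (a := t + 1) (by omega),
        Finset.Ico_eq_empty (a := t) (b := 0) (by omega)]
      simp
    · have e : Finset.Ico t 0 = insert t (Finset.Ico (t + 1) 0) := by
        ext x; simp only [Finset.mem_Ico, Finset.mem_insert]; omega
      rw [e, Finset.sum_insert (by simp), Finset.Ico_eq_empty (b := t + 1) (by omega),
        Finset.Ico_eq_empty (a := 0) (b := t) (by omega)]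
      simp
  · intro t ht
    simp [Finset.Ico_eq_empty (a := t) (b := 0) (by omega)]
  · intro t ht
    simp [Finset.Ico_eq_empty (a := 0) (b := t) (by omega)]

/-- BD equivalence to a lattice gives bounded discrepancy. -/
lemma BD_count {ξ a b α : ℝ} (hα : 0 < α)
    (h : BDEquiv ((fun t : ℤ => (t : ℝ)) ''
            {t : ℤ | ∃ y : ℤ, a ≤ ξ * t - y ∧ ξ * t - y ≤ b})
          {x : ℝ | ∃ n : ℤ, x = α * n}) :
    ∃ K, ∀ s t : ℤ, s ≤ t → |∑ i ∈ Finset.Ico s t, kI ξ a b i - (t - s) / α| ≤ K := by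
  classical
  set Q : ℤ → Prop := fun t => ∃ y : ℤ, a ≤ ξ * t - y ∧ ξ * t - y ≤ b with hQ
  obtain ⟨φ, M, hM⟩ := h
  have hf : ∀ t : ℤ, ∃ n : ℤ, ∀ ht : Q t, (φ ⟨(t:ℝ), ⟨t, ht, rfl⟩⟩ : ℝ) = α * n := by
    intro t
    by_cases ht : Q t
    · obtain ⟨n, hn⟩ := (φ ⟨(t:ℝ), ⟨t, ht, rfl⟩⟩).2
      exact ⟨n, fun _ => hn⟩
    · exact ⟨0, fun h => absurd h ht⟩
  choose ψ hψ using hf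
  have hg : ∀ n : ℤ, ∃ t : ℤ, Q t ∧ (φ.symm ⟨α * n, ⟨n, rfl⟩⟩ : ℝ) = t := by
    intro n
    obtain ⟨t, ht, e⟩ := (φ.symm ⟨α * n, ⟨n, rfl⟩⟩).2
    exact ⟨t, ht, e.symm⟩
  choose χ hχQ hχ using hg
  have ψinj : ∀ s t, Q s → Q t → ψ s = ψ t → s = t := by
    intro s t hs ht e
    have h1 := hψ s hs
    rw [e, ← hψ t ht] at h1
    have h2 := φ.injective (Subtype.ext h1)
    have h3 : (s:ℝ) = t := congrArg Subtype.val h2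
    exact_mod_cast h3
  have χinj : ∀ m n, χ m = χ n → m = n := by
    intro m n e
    have h1 := hχ m
    rw [e, ← hχ n] at h1
    have h2 := φ.symm.injective (Subtype.ext h1)
    have h3 : α * (m:ℝ) = α * n := congrArg Subtype.val h2
    have h4 := mul_left_cancel₀ hα.ne' h3
    exact_mod_cast h4
  have ψM : ∀ t, Q t → |(t:ℝ) - α * ψ t| ≤ M := by
    intro t ht
    have := hM ⟨(t:ℝ), ⟨t, ht, rfl⟩⟩
    rwa [hψ t ht] at this
  have χM : ∀ n, |(χ n:ℝ) - α * n| ≤ M := by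
    intro n
    have := hM (φ.symm ⟨α * n, ⟨n, rfl⟩⟩)
    rwa [hχ n, Equiv.apply_symm_apply] at this
  have hM0 : 0 ≤ M := (abs_nonneg _).trans (χM 0)
  refine ⟨2 * M / α + 1, fun s t hst => ?_⟩
  have hsum : ∑ i ∈ Finset.Ico s t, kI ξ a b i = (((Finset.Ico s t).filter Q).card : ℝ) := by
    rw [Finset.card_filter]
    push_cast
    exact Finset.sum_congr rfl fun i _ => by simp only [kI, hQ]
  rw [hsum]
  have hst' : (s:ℝ) ≤ t := by exact_mod_cast hst
  have up : (((Finset.Ico s t).filter Q).card : ℝ) ≤ (t - s) / α + (2 * M / α + 1) := by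
    have h1 : ((Finset.Ico s t).filter Q).card ≤
        (Finset.Icc ⌈((s:ℝ) - M) / α⌉ ⌊((t:ℝ) + M) / α⌋).card := by
      apply Finset.card_le_card_of_injOn ψ
      · intro i hi
        rw [Finset.mem_coe, Finset.mem_filter, Finset.mem_Ico] at hi
        obtain ⟨⟨i1, i2⟩, i3⟩ := hi
        have i1' : (s:ℝ) ≤ i := by exact_mod_cast i1
        have i2' : (i:ℝ) < t := by exact_mod_cast i2
        have := abs_le.1 (ψM i i3)
        rw [Finset.mem_coe, Finset.mem_Icc, Int.ceil_le, Int.le_floor, div_le_iff₀ hα,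
          le_div_iff₀ hα]
        constructor <;> linarith
      · intro i hi j hj e
        simp only [Finset.coe_filter, Set.mem_ofPred_eq] at hi hj
        exact ψinj i j hi.2 hj.2 e
    have h2 : (((Finset.Ico s t).filter Q).card : ℝ) ≤
        ((⌊((t:ℝ) + M) / α⌋ + 1 - ⌈((s:ℝ) - M) / α⌉).toNat : ℝ) := by
      rw [Int.card_Icc] at h1; exact_mod_cast h1
    refine h2.trans ?_
    have h3 : (((⌊((t:ℝ) + M) / α⌋ + 1 - ⌈((s:ℝ) - M) / α⌉).toNat : ℤ) : ℝ) =
        ((max (⌊((t:ℝ) + M) / α⌋ + 1 - ⌈((s:ℝ) - M) / α⌉) 0 : ℤ) : ℝ) := by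
      rw [Int.toNat_eq_max]
    rw [Int.cast_natCast] at h3
    rw [h3]; push_cast
    apply max_le
    · have := Int.floor_le (((t:ℝ) + M) / α)
      have := Int.le_ceil (((s:ℝ) - M) / α)
      have : ((t:ℝ) + M) / α - ((s:ℝ) - M) / α = (t - s) / α + 2 * M / α := by ring
      linarith
    · have : 0 ≤ ((t:ℝ) - s) / α := div_nonneg (by linarith) hα.le
      positivity
  have lo : (t - s) / α - (2 * M / α + 1) ≤ (((Finset.Ico s t).filter Q).card : ℝ) := by
    have h1 : (Finset.Ico ⌈((s:ℝ) + M) / α⌉ ⌈((t:ℝ) - M) / α⌉).card ≤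
        ((Finset.Ico s t).filter Q).card := by
      apply Finset.card_le_card_of_injOn χ
      · intro i hi
        rw [Finset.mem_coe, Finset.mem_Ico, Int.ceil_le, Int.lt_ceil, div_le_iff₀ hα,
          lt_div_iff₀ hα] at hi
        have := abs_le.1 (χM i)
        rw [Finset.mem_coe, Finset.mem_filter, Finset.mem_Ico]
        have q1 : (s:ℝ) ≤ χ i := by linarith
        have q2 : (χ i:ℝ) < t := by linarith
        exact ⟨⟨by exact_mod_cast q1, by exact_mod_cast q2⟩, hχQ i⟩
      · intro i _ j _ e
        exact χinj i j e
    have h2 : ((⌈((t:ℝ) - M) / α⌉ - ⌈((s:ℝ) + M) / α⌉ : ℤ) : ℝ) ≤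
        (((Finset.Ico s t).filter Q).card : ℝ) := by
      rw [Int.card_Ico] at h1
      have : ⌈((t:ℝ) - M) / α⌉ - ⌈((s:ℝ) + M) / α⌉ ≤
        (((Finset.Ico s t).filter Q).card : ℤ) := by omega
      exact_mod_cast this
    refine le_trans ?_ h2
    push_cast
    have := Int.ceil_lt_add_one (((s:ℝ) + M) / α)
    have := Int.le_ceil (((t:ℝ) - M) / α)
    have : ((t:ℝ) - M) / α - ((s:ℝ) + M) / α = (t - s) / α - 2 * M / α := by ring
    linarith
  rw [abs_le]
  constructor <;> linarith

/-- Bounded discrepancy gives BD equivalence to a lattice. -/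
lemma count_BD {ξ a b l : ℝ} (hl : 0 < l) {h : ℤ → ℝ}
    (hh : ∀ t, h (t + 1) - h t = kI ξ a b t - l) {B : ℝ} (hB : ∀ t, |h t| ≤ B) :
    BDEquiv ((fun t : ℤ => (t : ℝ)) ''
            {t : ℤ | ∃ y : ℤ, a ≤ ξ * t - y ∧ ξ * t - y ≤ b})
          {x : ℝ | ∃ n : ℤ, x = l⁻¹ * n} := by
  classical
  set Q : ℤ → Prop := fun t => ∃ y : ℤ, a ≤ ξ * t - y ∧ ξ * t - y ≤ b with hQ
  have hI : ∀ t, kI ξ a b t = ((if Q t then 1 else 0 : ℤ) : ℝ) := by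
    intro t; simp only [kI, hQ]; split_ifs <;> simp
  have hN : ∀ t : ℤ, ∃ n : ℤ, h t - h 0 + l * t = n := by
    intro t
    induction t using Int.induction_on with
    | zero => exact ⟨0, by simp⟩
    | succ k ih =>
      obtain ⟨n, hn⟩ := ih
      refine ⟨n + (if Q k then 1 else 0 : ℤ), ?_⟩
      have := hh k
      rw [hI] at this
      push_cast at *; linarith
    | pred k ih =>
      obtain ⟨n, hn⟩ := ih
      refine ⟨n - (if Q (-k - 1) then 1 else 0 : ℤ), ?_⟩
      have := hh (-k - 1)
      rw [hI, sub_add_cancel] at this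
      push_cast at *; linarith
  choose N hN using hN
  have hstep : ∀ t, N (t + 1) = N t + (if Q t then 1 else 0 : ℤ) := by
    intro t
    have h1 := hN t
    have h2 := hN (t + 1)
    have h3 := hh t
    rw [hI] at h3
    have : (N (t + 1) : ℝ) = ((N t + (if Q t then 1 else 0 : ℤ) : ℤ) : ℝ) := by
      rw [Int.cast_add, ← h1, ← h2]; push_cast at *; linarith
    exact_mod_cast this
  have hmono : Monotone N := by
    apply monotone_int_of_le_succ
    intro t; rw [hstep]; split_ifs <;> omega
  have hinj : ∀ s t, Q s → Q t → N s = N t → s = t := by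
    have : ∀ s t, Q s → s < t → N s < N t := by
      intro s t hs hst
      have h1 := hmono (show s + 1 ≤ t by omega)
      have h2 := hstep s
      rw [if_pos hs] at h2; omega
    intro s t hs ht e
    rcases lt_trichotomy s t with h | h | h
    · have := this s t hs h; omega
    · exact h
    · have := this t s ht h; omega
  have hsurj : ∀ n, ∃ t, Q t ∧ N t = n := by
    intro n
    have hB0 := abs_le.1 (hB 0)
    obtain ⟨t, ht, hmax⟩ := Int.exists_greatest_of_bdd (P := fun t => N t ≤ n) (by
      refine ⟨⌈((n:ℝ) + 2 * B) / l⌉, fun z hz => ?_⟩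
      have hz' : (N z:ℝ) ≤ n := by exact_mod_cast hz
      have h1 := abs_le.1 (hB z)
      have h2 := hN z
      have h3 : (z:ℝ) ≤ (n + 2 * B) / l := by
        rw [le_div_iff₀ hl]; linarith
      have h4 := h3.trans (Int.le_ceil _)
      exact_mod_cast h4) (by
      refine ⟨⌊((n:ℝ) - 2 * B) / l⌋, ?_⟩
      have h1 := abs_le.1 (hB ⌊((n:ℝ) - 2 * B) / l⌋)
      have h2 := hN ⌊((n:ℝ) - 2 * B) / l⌋
      have h3 := Int.floor_le (((n:ℝ) - 2 * B) / l)
      rw [le_div_iff₀ hl] at h3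
      have h4 : (N ⌊((n:ℝ) - 2 * B) / l⌋:ℝ) ≤ n := by linarith
      exact_mod_cast h4)
    have h1 : ¬ N (t + 1) ≤ n := fun h => by
      have := hmax _ h; omega
    rw [hstep] at h1
    by_cases hq : Q t
    · rw [if_pos hq] at h1
      exact ⟨t, hq, by omega⟩
    · rw [if_neg hq] at h1; omega
  have hmap : ∀ y : ((fun t : ℤ => (t : ℝ)) '' {t : ℤ | Q t}), ∃ t : ℤ, Q t ∧ (y:ℝ) = t := by
    rintro ⟨_, t, ht, rfl⟩
    exact ⟨t, ht, rfl⟩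
  choose τ hτQ hτ using hmap
  let f : ((fun t : ℤ => (t : ℝ)) '' {t : ℤ | Q t}) → {x : ℝ | ∃ n : ℤ, x = l⁻¹ * n} :=
    fun y => ⟨l⁻¹ * N (τ y), ⟨_, rfl⟩⟩
  have hf : Function.Bijective f := by
    constructor
    · intro y z e
      have h1 : l⁻¹ * (N (τ y) : ℝ) = l⁻¹ * N (τ z) := congrArg Subtype.val e
      have h2 := mul_left_cancel₀ (inv_pos.2 hl).ne' h1
      have h3 : N (τ y) = N (τ z) := by exact_mod_cast h2
      have h4 := hinj _ _ (hτQ y) (hτQ z) h3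
      apply Subtype.ext
      rw [hτ y, hτ z, h4]
    · rintro ⟨_, n, rfl⟩
      obtain ⟨t, ht, rfl⟩ := hsurj n
      refine ⟨⟨(t:ℝ), ⟨t, ht, rfl⟩⟩, ?_⟩
      have h1 : (t:ℝ) = τ ⟨(t:ℝ), ⟨t, ht, rfl⟩⟩ := hτ ⟨(t:ℝ), ⟨t, ht, rfl⟩⟩
      have h2 : t = τ ⟨(t:ℝ), ⟨t, ht, rfl⟩⟩ := by exact_mod_cast h1
      apply Subtype.ext
      show l⁻¹ * (N (τ _) : ℝ) = _
      rw [← h2]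
  refine ⟨Equiv.ofBijective f hf, l⁻¹ * (2 * B), fun y => ?_⟩
  show |(y:ℝ) - l⁻¹ * (N (τ y) : ℝ)| ≤ _
  have h1 : (y:ℝ) - l⁻¹ * (N (τ y) : ℝ) = l⁻¹ * (h 0 - h (τ y)) := by
    rw [← hN, hτ y]; field_simp; ring
  rw [h1, abs_mul, abs_of_pos (inv_pos.2 hl)]
  apply mul_le_mul_of_nonneg_left _ (inv_pos.2 hl).le
  have := abs_le.1 (hB 0)
  have := abs_le.1 (hB (τ y))
  rw [abs_le]; constructor <;> linarith

end

/-- Theorem 3 of the paper (Kesten's theorem reformulated): the cut-and-project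
set obtained from the irrational strip `a ≤ ξt − y ≤ b` is BD-equivalent to a
lattice in ℝ if and only if the boundary lines of the strip are equivalent
mod ℤ², i.e. `b − a ∈ ℤ + ℤξ`. -/
theorem cut_and_project_BD_lattice_iff (ξ a b : ℝ) (hξ : Irrational ξ)
    (hab : a < b) (hb : b < a + 1) :
    (∃ α : ℝ, 0 < α ∧
        BDEquiv ((fun t : ℤ => (t : ℝ)) ''
            {t : ℤ | ∃ y : ℤ, a ≤ ξ * t - y ∧ ξ * t - y ≤ b})
          {x : ℝ | ∃ n : ℤ, x = α * n}) ↔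
      ∃ k m : ℤ, b - a = k * ξ + m := by
  constructor
  · rintro ⟨α, hα, hBD⟩
    obtain ⟨K, hK⟩ := BD_count hα hBD
    obtain ⟨P, hP, hP1, hP2⟩ := psum (kI ξ a b)
    obtain ⟨k, hk, hk'⟩ := kI_kF hξ hab hb
    refine kesten hξ (c := 1 / α) (h := fun t => P t - t / α - k t) ?_ (B := K + 1) ?_
    · intro t
      have := hP t
      have := hk' t
      push_cast
      rw [add_div]
      linarith
    · intro t
      refine (abs_sub _ _).trans (add_le_add ?_ (hk t))
      rcases le_total 0 t with ht | ht
      · have := hK 0 t ht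
        rw [hP1 t ht]
        simpa using this
      · have := hK t 0 ht
        rw [hP2 t ht, ← abs_neg]
        have e : -(-∑ i ∈ Finset.Ico t 0, kI ξ a b i - (t:ℝ) / α) =
            ∑ i ∈ Finset.Ico t 0, kI ξ a b i - (((0:ℤ):ℝ) - t) / α := by
          push_cast; ring
        rw [e]; exact this
  · rintro ⟨k, m, hkm⟩
    obtain ⟨q, hq, hq'⟩ := kI_kF hξ hab hb
    obtain ⟨h, ⟨B, hB⟩, hh⟩ := cobdd (fun t : ℤ => Int.fract (ξ * t - a)) (fun t => by
      rw [abs_of_nonneg (Int.fract_nonneg _)]; exact (Int.fract_lt_one _).le) k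
    refine ⟨(b - a)⁻¹, inv_pos.2 (by linarith), ?_⟩
    refine count_BD (l := b - a) (by linarith) (h := fun t => h t + q t) ?_ (B := B + 1) ?_
    · intro t
      have h1 := hh t
      have h2 := hq' t
      have h3 : kF a b (ξ * t) = b - a + (Int.fract (ξ * ((t - k : ℤ) : ℝ) - a) -
          Int.fract (ξ * t - a)) := by
        unfold kF Int.fract
        have e : ξ * t - b = (ξ * ((t - k : ℤ) : ℝ) - a) - (m : ℤ) := by push_cast; linarith
        rw [e, Int.floor_sub_intCast]
        push_cast; linarith
      linarith
    · intro t
      exact (abs_add_le _ _).trans (add_le_add (hB t) (hq t))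
end

section
/- Let ξ be irrational and let I = [a, b) ⊂ [0,1) with b − a ∉ ℤ + ℤξ. Then the function N ↦ #{1 ≤ n ≤ N : frac(nξ) ∈ I} − N(b−a) is unbounded. -/
open scoped Classical

open Filter Topology MeasureTheory

/-- An eigenvalue of an irrational rotation lies in the obvious group. -/
lemma kesten_eigen (ξ c : ℝ) (H : AddCircle (1 : ℝ) → ℂ) (hm : Measurable H)
    (hn : ∀ t, ‖H t‖ = 1)
    (he : ∀ t, H (t + (ξ : AddCircle (1 : ℝ))) =
      Complex.exp (2 * Real.pi * Complex.I * c) * H t) :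
    ∃ k m : ℤ, c = k * ξ + m := by
  have hL : MemLp H 2 (AddCircle.haarAddCircle (T := 1)) :=
    MemLp.of_bound hm.aestronglyMeasurable 1 (Eventually.of_forall fun t => (hn t).le)
  obtain ⟨k, hk⟩ : ∃ k : ℤ, fourierCoeff H k ≠ 0 := by
    by_contra hcon
    push Not at hcon
    have h0 : hL.toLp H = 0 := by
      apply (fourierBasis (T := 1)).repr.injective
      ext i
      rw [fourierBasis_repr, fourierCoeff_congr_ae hL.coeFn_toLp, hcon]
      simp
    have h1 : H =ᵐ[AddCircle.haarAddCircle (T := 1)] 0 := by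
      have := hL.coeFn_toLp
      rw [h0] at this
      exact this.symm.trans (Lp.coeFn_zero _ _ _)
    obtain ⟨t, ht⟩ := h1.exists
    have := hn t
    rw [ht] at this
    simp at this
  have hshift : fourierCoeff H k =
      (fourier (-k) (ξ : AddCircle (1 : ℝ)) * Complex.exp (2 * Real.pi * Complex.I * c)) *
        fourierCoeff H k := by
    conv_lhs => rw [fourierCoeff, ← integral_add_right_eq_self _ (ξ : AddCircle (1 : ℝ))]
    rw [fourierCoeff, ← integral_const_mul]
    congr 1
    ext t
    rw [he t, fourier_apply, smul_add, AddCircle.toCircle_add]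
    simp only [fourier_apply, smul_eq_mul, Circle.coe_mul]
    ring
  have h1 : fourier (-k) (ξ : AddCircle (1 : ℝ)) *
      Complex.exp (2 * Real.pi * Complex.I * c) = 1 := by
    have : (fourier (-k) (ξ : AddCircle (1 : ℝ)) *
      Complex.exp (2 * Real.pi * Complex.I * c)) * fourierCoeff H k = 1 * fourierCoeff H k := by
      rw [← hshift, one_mul]
    exact mul_right_cancel₀ hk this
  rw [fourier_coe_apply, ← Complex.exp_add, Complex.exp_eq_one_iff] at h1
  obtain ⟨m, hm⟩ := h1
  refine ⟨k, m, ?_⟩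
  have h2 : (2 * Real.pi * Complex.I) * ((c : ℂ) - k * ξ - m) = 0 := by
    push_cast at hm
    linear_combination hm
  have h3 := (mul_eq_zero.1 h2).resolve_left Complex.two_pi_I_ne_zero
  have h4 : c - k * ξ - m = 0 := by exact_mod_cast h3
  linarith

/-- Natural multiples of an irrational are dense modulo one. -/
lemma kesten_dense (ξ : ℝ) (hξ : Irrational ξ) :
    Dense {x : ℝ | ∃ (k : ℕ) (m : ℤ), x = k * ξ + m} := by
  have h : DenseRange (· • (ξ : AddCircle (1 : ℝ)) : ℕ → AddCircle (1 : ℝ)) := by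
    rw [← denseRange_zsmul_iff_nsmul, AddCircle.denseRange_zsmul_coe_iff]
    simpa using hξ
  have h2 := QuotientAddGroup.dense_preimage_mk.2 h
  refine h2.mono ?_
  rintro x ⟨k, hk⟩
  have hk' : ((k • ξ : ℝ) : AddCircle (1 : ℝ)) = x := hk
  have h0 : ((x - k • ξ : ℝ) : AddCircle (1 : ℝ)) = 0 := by
    rw [AddCircle.coe_sub, hk', sub_self]
  obtain ⟨m, hm⟩ := (AddCircle.coe_eq_zero_iff (1 : ℝ)).1 h0
  refine ⟨k, m, ?_⟩
  simp only [zsmul_eq_mul, mul_one, nsmul_eq_mul] at hm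
  linarith

/-- The centered indicator function. -/
noncomputable def kestenPhi (a b : ℝ) (x : ℝ) : ℝ :=
  (if Int.fract x ∈ Set.Ico a b then 1 else 0) - (b - a)

lemma kestenPhi_add_int (a b x : ℝ) (m : ℤ) : kestenPhi a b (x + m) = kestenPhi a b x := by
  simp [kestenPhi]

lemma kestenPhi_right (a b x : ℝ) : ∀ᶠ y in 𝓝[≥] x, kestenPhi a b y = kestenPhi a b x := by
  have h1 : ∀ᶠ y in 𝓝[≥] x, ⌊y⌋ = ⌊x⌋ := by
    have := tendsto_floor_right_pure_floor x
    rwa [tendsto_pure] at this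
  have h2 : ∀ᶠ y in 𝓝[≥] x, x ≤ y := self_mem_nhdsWithin
  have h3 : ∀ c, Int.fract x < c → ∀ᶠ y in 𝓝[≥] x, y < c + ⌊x⌋ := by
    intro c hc
    apply nhdsWithin_le_nhds
    apply eventually_lt_nhds
    have := Int.self_sub_floor x
    linarith
  have key : ∀ c, ∀ᶠ y in 𝓝[≥] x, (Int.fract y < c ↔ Int.fract x < c) := by
    intro c
    by_cases hc : Int.fract x < c
    · filter_upwards [h1, h2, h3 c hc] with y e1 e2 e3
      have := Int.self_sub_floor y
      rw [e1] at this
      exact ⟨fun _ => hc, fun _ => by linarith⟩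
    · filter_upwards [h1, h2] with y e1 e2
      have e4 := Int.self_sub_floor y
      have e5 := Int.self_sub_floor x
      rw [e1] at e4
      exact ⟨fun h => by linarith, fun h => absurd h hc⟩
  filter_upwards [key a, key b] with y e1 e2
  simp only [kestenPhi, Set.mem_Ico, ← not_lt (b := a), e1, e2]

/-- Birkhoff sums. -/
noncomputable def kestenS (ξ a b : ℝ) (N : ℕ) (x : ℝ) : ℝ :=
  ∑ n ∈ Finset.range N, kestenPhi a b (x + n * ξ)

lemma kestenS_add_int (ξ a b x : ℝ) (N : ℕ) (m : ℤ) :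
    kestenS ξ a b N (x + m) = kestenS ξ a b N x := by
  unfold kestenS
  refine Finset.sum_congr rfl fun n _ => ?_
  rw [← kestenPhi_add_int a b (x + n * ξ) m]
  congr 1
  ring

lemma kestenS_succ (ξ a b x : ℝ) (N : ℕ) :
    kestenS ξ a b (N + 1) x = kestenPhi a b x + kestenS ξ a b N (x + ξ) := by
  unfold kestenS
  rw [Finset.sum_range_succ', add_comm]
  congr 1
  · simp
  · refine Finset.sum_congr rfl fun n _ => ?_
    congr 1
    push_cast
    ring

lemma kestenS_add (ξ a b x : ℝ) (M N : ℕ) :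
    kestenS ξ a b (M + N) x = kestenS ξ a b M x + kestenS ξ a b N (x + M * ξ) := by
  unfold kestenS
  rw [Finset.sum_range_add]
  congr 1
  refine Finset.sum_congr rfl fun n _ => ?_
  congr 1
  push_cast
  ring

lemma kestenS_right (ξ a b x : ℝ) (N : ℕ) :
    ∀ᶠ y in 𝓝[≥] x, kestenS ξ a b N y = kestenS ξ a b N x := by
  have : ∀ n ∈ Finset.range N, ∀ᶠ y in 𝓝[≥] x,
      kestenPhi a b (y + n * ξ) = kestenPhi a b (x + n * ξ) := by
    intro n _
    have ht : Tendsto (fun y : ℝ => y + n * ξ) (𝓝[≥] x) (𝓝[≥] (x + n * ξ)) := by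
      apply tendsto_nhdsWithin_of_tendsto_nhds_of_eventually_within
      · exact ((continuous_id.add continuous_const).tendsto x).mono_left nhdsWithin_le_nhds
      · filter_upwards [self_mem_nhdsWithin] with y hy
        simpa using hy
    exact ht.eventually (kestenPhi_right a b _)
  filter_upwards [(Finset.eventually_all _).2 this] with y hy
  exact Finset.sum_congr rfl hy

lemma kestenS_count (ξ a b : ℝ) (N : ℕ) :
    kestenS ξ a b N ξ = (((Finset.Icc 1 N).filter
          (fun n => Int.fract ((n : ℝ) * ξ) ∈ Set.Ico a b)).card : ℝ) - N * (b - a) := by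
  have himg : (do
        let a ← Finset.Icc 1 N
        pure (a : ℝ)) = (Finset.Icc 1 N).image (fun n : ℕ => (n : ℝ)) := by
    ext x
    simp
  rw [himg]
  unfold kestenS kestenPhi
  rw [Finset.sum_sub_distrib, Finset.card_filter,
    Finset.sum_image (fun x _ y _ hxy => Nat.cast_injective hxy)]
  congr 1
  · push_cast
    rw [Finset.range_eq_Ico, ← Finset.Ico_add_one_right_eq_Icc,
      Finset.sum_Ico_eq_sum_range, Finset.sum_Ico_eq_sum_range]
    refine Finset.sum_congr (by simp) fun n _ => ?_
    have : ξ + ((0 + n : ℕ) : ℝ) * ξ = ((1 + n : ℕ) : ℝ) * ξ := by push_cast; ring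
    rw [this]
  · rw [Finset.sum_const, Finset.card_range, nsmul_eq_mul]

lemma kestenS_bound (ξ a b C : ℝ) (hξ : Irrational ξ)
    (h : ∀ N, |kestenS ξ a b N ξ| ≤ C) (N : ℕ) (x : ℝ) : |kestenS ξ a b N x| ≤ 2 * C := by
  obtain ⟨u, hu, hsub⟩ := mem_nhdsGE_iff_exists_Ico_subset.1 (kestenS_right ξ a b x N)
  obtain ⟨z, ⟨k, m, hz⟩, hz1, hz2⟩ := ((kesten_dense ξ hξ).exists_between
    (sub_lt_sub_right hu ξ))
  have hmem : ξ + z ∈ Set.Ico x u := ⟨by linarith, by linarith⟩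
  have e : kestenS ξ a b N (ξ + z) = kestenS ξ a b N x := hsub hmem
  have e2 : ξ + z = (ξ + k * ξ) + m := by rw [hz]; ring
  rw [← e, e2, kestenS_add_int]
  have e3 := kestenS_add ξ a b ξ k N
  have h1 := abs_le.1 (h k)
  have h2 := abs_le.1 (h (k + N))
  rw [abs_le]
  constructor <;> linarith

lemma kestenS_measurable (ξ a b : ℝ) (N : ℕ) : Measurable (kestenS ξ a b N) := by
  have hphi : Measurable (kestenPhi a b) := by
    unfold kestenPhi
    refine Measurable.sub (Measurable.ite ?_ measurable_const measurable_const) measurable_const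
    exact measurable_fract measurableSet_Ico
  unfold kestenS
  exact Finset.measurable_sum _ fun n _ => hphi.comp (measurable_id.add_const _)

/-- Kesten's theorem for the orbit of 0, necessity direction: if the length of
`I = [a,b) ⊆ [0,1)` is not in `ℤ + ℤξ`, then the error term
`#{1 ≤ n ≤ N : frac(nξ) ∈ I} − N(b−a)` is unbounded. -/
theorem kesten_orbit_zero_unbounded (ξ a b : ℝ) (hξ : Irrational ξ)
    (ha : 0 ≤ a) (hab : a ≤ b) (hb : b ≤ 1)
    (hlen : ¬∃ k m : ℤ, b - a = k * ξ + m) :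
    ¬∃ C : ℝ, ∀ N : ℕ,
      |(((Finset.Icc 1 N).filter
          (fun n => Int.fract ((n : ℝ) * ξ) ∈ Set.Ico a b)).card : ℝ)
        - N * (b - a)| ≤ C := by
  rintro ⟨C, hC⟩
  apply hlen
  have hB := kestenS_bound ξ a b C hξ (fun N => by rw [kestenS_count]; exact hC N)
  set g : ℝ → ℝ := fun x => limsup (fun N => kestenS ξ a b N x) atTop with hg
  have hgm : Measurable g := Measurable.limsup (kestenS_measurable ξ a b)
  have hgi : ∀ x (m : ℤ), g (x + m) = g x := by
    intro x m
    simp only [hg, kestenS_add_int]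
  have hgs : ∀ x, g x = kestenPhi a b x + g (x + ξ) := by
    intro x
    simp only [hg]
    rw [← limsup_nat_add (fun N => kestenS ξ a b N x) 1]
    simp only [kestenS_succ]
    apply limsup_const_add
    · exact isBoundedUnder_of ⟨2 * C, fun N => (abs_le.1 (hB N _)).2⟩
    · exact (isBoundedUnder_of ⟨-(2 * C), fun N => (abs_le.1 (hB N _)).1⟩ :
        IsBoundedUnder (· ≥ ·) atTop _).isCoboundedUnder_le
  set r : AddCircle (1 : ℝ) → ℝ := fun t => (AddCircle.equivIco 1 0 t : ℝ) with hr
  have hrm : Measurable r :=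
    measurable_subtype_coe.comp (AddCircle.measurableEquivIco 1 0).measurable
  have hrx : ∀ x : ℝ, g (r (x : AddCircle (1 : ℝ))) = g x := by
    intro x
    have : r (x : AddCircle (1 : ℝ)) = Int.fract x := by
      have := AddCircle.coe_equivIco_mk_apply (p := (1 : ℝ)) x
      rwa [div_one, mul_one] at this
    rw [this, ← hgi (Int.fract x) ⌊x⌋, Int.fract_add_floor]
  apply kesten_eigen ξ (b - a) (fun t => Complex.exp ((2 * Real.pi * g (r t) : ℝ) * Complex.I))
  · have : Measurable fun t => 2 * Real.pi * g (r t) := (hgm.comp hrm).const_mul _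
    fun_prop
  · intro t
    exact Complex.norm_exp_ofReal_mul_I _
  · intro t
    obtain ⟨x, rfl⟩ := QuotientAddGroup.mk_surjective t
    have e1 := hrx x
    have e2 := hrx (x + ξ)
    have e3 := hgs x
    change Complex.exp ((2 * Real.pi * g (r ((x + ξ : ℝ) : AddCircle (1 : ℝ))) : ℝ) * Complex.I)
      = _ * Complex.exp ((2 * Real.pi * g (r (x : AddCircle (1 : ℝ))) : ℝ) * Complex.I)
    rw [e1, e2, ← Complex.exp_add, Complex.exp_eq_exp_iff_exists_int]
    rw [e3]
    unfold kestenPhi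
    split_ifs
    · exact ⟨-1, by push_cast; ring⟩
    · exact ⟨0, by push_cast; ring⟩
end

section
/- Let ξ be irrational and I ⊂ ℝ/ℤ an interval. Then for any two points x, x′ ∈ ℝ/ℤ, the discrepancy D(N; I, x) is bounded in N if and only if D(N; I, x′) is bounded in N. -/
open scoped Classical

/-- The local discrepancy of the orbit `x, x+ξ, ..., x+Nξ` (mod ℤ) with respect to
the interval `[a,b) ⊆ [0,1)` (viewed as an interval in ℝ/ℤ). -/
noncomputable def localDisc (ξ x a b : ℝ) (N : ℕ) : ℝ :=
  (((Finset.range (N + 1)).filter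
      (fun n => Int.fract (x + n * ξ) ∈ Set.Ico a b)).card : ℝ) - N * (b - a)

open Filter Topology in
lemma fract_mem_Ico_right (a b y : ℝ) : ∀ᶠ ε in 𝓝[>] (0:ℝ),
    (Int.fract (y + ε) ∈ Set.Ico a b ↔ Int.fract y ∈ Set.Ico a b) := by
  have h1 : Int.fract y < 1 := Int.fract_lt_one y
  have h0 : 0 ≤ Int.fract y := Int.fract_nonneg y
  have key : ∀ c : ℝ, Int.fract y < c → ∀ᶠ ε in 𝓝[>] (0:ℝ), Int.fract y + ε < c := by
    intro c hc
    have : Set.Ioo (0:ℝ) (c - Int.fract y) ∈ 𝓝[>] (0:ℝ) := Ioo_mem_nhdsGT (by linarith)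
    filter_upwards [this] with ε hε
    linarith [hε.2]
  have hpos : ∀ᶠ ε in 𝓝[>] (0:ℝ), 0 < ε := self_mem_nhdsWithin
  have heq : ∀ᶠ ε in 𝓝[>] (0:ℝ), Int.fract (y + ε) = Int.fract y + ε := by
    filter_upwards [key 1 h1, hpos] with ε h2 h3
    rw [Int.fract_eq_iff]
    refine ⟨by linarith, h2, ⌊y⌋, ?_⟩
    have := Int.floor_add_fract y
    linarith
  have ea : ∀ᶠ ε in 𝓝[>] (0:ℝ), (a ≤ Int.fract y + ε ↔ a ≤ Int.fract y) := by
    rcases le_or_gt a (Int.fract y) with h | h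
    · filter_upwards [hpos] with ε h3
      exact ⟨fun _ => h, fun _ => by linarith⟩
    · filter_upwards [key a h] with ε h3
      exact ⟨fun _ => by linarith, fun _ => by linarith⟩
  have eb : ∀ᶠ ε in 𝓝[>] (0:ℝ), (Int.fract y + ε < b ↔ Int.fract y < b) := by
    rcases le_or_gt b (Int.fract y) with h | h
    · filter_upwards [hpos] with ε h3
      exact ⟨fun _ => by linarith, fun _ => by linarith⟩
    · filter_upwards [key b h] with ε h3
      exact ⟨fun _ => h, fun _ => h3⟩
  filter_upwards [heq, ea, eb] with ε h2 h3 h4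
  rw [h2, Set.mem_Ico, Set.mem_Ico, h3, h4]

lemma exists_nat_orbit (ξ : ℝ) (hξ : Irrational ξ) (x x' δ : ℝ) (hδ : 0 < δ) :
    ∃ (m : ℕ) (k : ℤ) (ε : ℝ), 0 < ε ∧ ε < δ ∧ x + m * ξ = x' + ε + k := by
  have hd : DenseRange (fun n : ℕ => n • (ξ : AddCircle (1:ℝ))) := by
    rw [← denseRange_zsmul_iff_nsmul, AddCircle.denseRange_zsmul_coe_iff]
    simpa using hξ
  have ho : IsOpen ((fun t : ℝ => (t : AddCircle (1:ℝ))) '' Set.Ioo (x' - x) (x' - x + δ)) :=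
    QuotientAddGroup.isOpenMap_coe _ isOpen_Ioo
  obtain ⟨m, t, ht, hm⟩ := hd.exists_mem_open ho
    (Set.Nonempty.image _ (Set.nonempty_Ioo.2 (by linarith)))
  have hm' : ((t : ℝ) : AddCircle (1:ℝ)) = ((m * ξ : ℝ) : AddCircle (1:ℝ)) := by
    have h : (t : AddCircle (1:ℝ)) = m • (ξ : AddCircle (1:ℝ)) := hm
    rw [h, ← AddCircle.coe_nsmul, nsmul_eq_mul]
  have h0 : ((m * ξ - t : ℝ) : AddCircle (1:ℝ)) = 0 := by
    rw [AddCircle.coe_sub, hm', sub_self]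
  obtain ⟨k, hk⟩ := (AddCircle.coe_eq_zero_iff (1:ℝ)).1 h0
  simp only [zsmul_eq_mul, mul_one] at hk
  exact ⟨m, k, t - (x' - x), by linarith [ht.1], by linarith [ht.2], by linarith⟩

lemma localDisc_eq_sum (ξ x a b : ℝ) (N : ℕ) : localDisc ξ x a b N =
    (∑ n ∈ Finset.range (N + 1), if Int.fract (x + n * ξ) ∈ Set.Ico a b then (1:ℝ) else 0)
      - N * (b - a) := by
  have hS : (do let n ← Finset.range (N + 1); pure (n : ℝ) : Finset ℝ)
      = (Finset.range (N + 1)).image (fun n : ℕ => (n : ℝ)) := by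
    ext y
    simp [Finset.bind_def, Finset.pure_def, eq_comm]
  rw [localDisc, hS, Finset.card_filter, Finset.sum_image (fun i _ j _ h => Nat.cast_injective h)]
  norm_num

open Filter Topology in
lemma disc_bounded_aux (ξ a b : ℝ) (hξ : Irrational ξ)
    (hab : a ≤ b) (x x' : ℝ)
    (h : ∃ C : ℝ, ∀ N : ℕ, |localDisc ξ x a b N| ≤ C) :
    ∃ C : ℝ, ∀ N : ℕ, |localDisc ξ x' a b N| ≤ C := by
  obtain ⟨C, hC⟩ := h
  refine ⟨2 * C + (b - a), fun N => ?_⟩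
  have hC0 : 0 ≤ C := (abs_nonneg _).trans (hC 0)
  have hev : ∀ᶠ ε in 𝓝[>] (0:ℝ), ∀ n ∈ Finset.range (N + 1),
      (Int.fract (x' + n * ξ + ε) ∈ Set.Ico a b ↔ Int.fract (x' + n * ξ) ∈ Set.Ico a b) :=
    (eventually_all_finset _).2 fun n _ => fract_mem_Ico_right a b _
  obtain ⟨δ, hδ, hsub⟩ := mem_nhdsGT_iff_exists_Ioo_subset.1 hev
  obtain ⟨m, k, ε, he0, heδ, hm⟩ := exists_nat_orbit ξ hξ x x' δ hδ
  have hε := hsub ⟨he0, heδ⟩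
  set f : ℕ → ℝ := fun n => if Int.fract (x + n * ξ) ∈ Set.Ico a b then (1:ℝ) else 0 with hf
  have e1 : localDisc ξ x' a b N = (∑ n ∈ Finset.range (N + 1), f (m + n)) - N * (b - a) := by
    rw [localDisc_eq_sum]
    congr 1
    refine Finset.sum_congr rfl fun n hn => ?_
    have h1 : x + ((m + n : ℕ) : ℝ) * ξ = x' + n * ξ + ε + k := by
      push_cast
      linarith
    simp only [hf]
    rw [h1, Int.fract_add_intCast]
    exact (if_congr (hε n hn) rfl rfl).symm
  have e2 := Finset.sum_range_add f m (N + 1)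
  have e3 := localDisc_eq_sum ξ x a b (m + N)
  have h3 := abs_le.1 (hC (m + N))
  change localDisc ξ x a b (m + N) = (∑ n ∈ Finset.range (m + (N + 1)), f n) - _ at e3
  rw [e2] at e3
  push_cast at e3
  rcases m with _ | m
  · simp at e1 e3 h3
    rw [abs_le]
    constructor <;> linarith
  · have e4 := localDisc_eq_sum ξ x a b m
    change localDisc ξ x a b m = (∑ n ∈ Finset.range (m + 1), f n) - _ at e4
    have h4 := abs_le.1 (hC m)
    push_cast at e3
    rw [abs_le]
    constructor <;> linarith

/-- Boundedness of the local discrepancy does not depend on the starting point: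
for any `x, x'`, `D(N; I, x)` is bounded in `N` iff `D(N; I, x')` is. -/
theorem disc_bounded_independent_of_basepoint (ξ a b : ℝ) (hξ : Irrational ξ)
    (ha : 0 ≤ a) (hab : a ≤ b) (hb : b ≤ 1) (x x' : ℝ) :
    (∃ C : ℝ, ∀ N : ℕ, |localDisc ξ x a b N| ≤ C) ↔
      (∃ C : ℝ, ∀ N : ℕ, |localDisc ξ x' a b N| ≤ C) := by
  exact ⟨disc_bounded_aux ξ a b hξ hab x x', disc_bounded_aux ξ a b hξ hab x' x⟩
end
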